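/- Let k be a countable totally ordered division ring. Then every completely normal distributive 0-lattice L with at most ℵ₁ elements is the image of a surjective lattice homomorphism from Idc F for some vector lattice F over k. -/

import Mathlib

universe u v

/-- A vector lattice over a totally ordered division ring `k`: a left `k`-vector space
with a translation-invariant lattice order compatible with multiplication by positive
scalars. -/
structure VectorLatticeOver (k : Type u) [DivisionRing k] [LinearOrder k] where
  carrier : Type v
  [lat : Lattice carrier]
  [grp : AddCommGroup carrier]
  [mod : Module k carrier]
  add_le_add_left' : ∀ a b : carrier, a ≤ b → ∀ c : carrier, c + a ≤ c + b
  smul_nonneg' : ∀ (c : k) (x : carrier), 0 < c → 0 ≤ x → 0 ≤ c • x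

attribute [instance] VectorLatticeOver.lat VectorLatticeOver.grp VectorLatticeOver.mod

/-- The principal `ℓ`-ideal `⟨a⟩ = {x : |x| ≤ n • a for some n ∈ ℕ}` generated by `a`
(here `|x| = x ⊔ -x`). -/
def principalLIdeal {G : Type*} [Lattice G] [AddCommGroup G] (a : G) : Set G :=
  {x : G | ∃ n : ℕ, x ⊔ -x ≤ n • a}

/-
In a vector lattice the map `φ x = ⟨x⁺⟩` satisfies `φ x ⊓ φ (-x) = ⊥`, `φ (x + y) ≤ φ x ⊔ φ y` and
`φ (c • x) ≤ φ x` for `c > 0`; call any lattice-valued map with these properties on a vector space a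
sign valuation. Conversely, a sign valuation `φ : V → L` comes from a vector lattice: each prime
ideal `P` of `L` makes `{x | φ (-x) ∈ P}` a total cone, hence gives a totally ordered quotient of
`V`, and in the product of these quotients the set of coordinates where `x` is positive is
`{P | φ x ∉ P}`. So `φ` corresponds to the map `⟨a⟩ ↦ {P | a is positive at P}` on the vector
sublattice generated by the image of `V`.

It remains to find a surjective sign valuation, which is built by transfinite recursion of length at
most `ω₁` on a free vector space with basis `L`. At each step the space `V` constructed so far is
countable, and extending `φ` to a new vector `q` with a prescribed value `φ q` amounts to choosing
`φ (x - q)` and `φ (q - x)` for all `x`, that is, a cut in `V`. Complete normality allows one to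
extend a cut on a finite set by one point, and countability then provides a cut on all of `V`.
-/

section DirectedUnion

theorem exists_forall_eqOn_of_directedOn {P α β : Type*} [Nonempty β] {r : P → P → Prop}
    {S : Set P} (hS : DirectedOn r S) {D : P → Set α} {f : P → α → β}
    (hf : ∀ p q, r p q → Set.EqOn (f p) (f q) (D p)) :
    ∃ g : α → β, ∀ p ∈ S, Set.EqOn g (f p) (D p) := by
  classical
  refine ⟨fun x => if h : ∃ p ∈ S, x ∈ D p then f h.choose x else Classical.arbitrary β,
    fun p hp x hx => ?_⟩
  have h : ∃ p ∈ S, x ∈ D p := ⟨p, hp, hx⟩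
  obtain ⟨q, -, hpq, hq⟩ := hS p hp h.choose h.choose_spec.1
  simp only [dif_pos h]
  rw [hf _ _ hq h.choose_spec.2, hf _ _ hpq hx]

end DirectedUnion

section CompletelyNormal

variable {L : Type*} [DistribLattice L] [OrderBot L]

/-- Complete normality of a distributive lattice with least element. -/
def IsCompletelyNormal (L : Type*) [DistribLattice L] [OrderBot L] : Prop :=
  ∀ a b : L, ∃ x y : L, a ⊔ b = a ⊔ y ∧ a ⊔ b = x ⊔ b ∧ x ⊓ y = ⊥

theorem IsCompletelyNormal.exists_disjoint (hL : IsCompletelyNormal L) (a b : L) :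
    ∃ u ≤ a, ∃ l ≤ b, Disjoint u l ∧ a ≤ u ⊔ b ∧ b ≤ l ⊔ a := by
  obtain ⟨x, y, hay, hxb, hxy⟩ := hL a b
  have hax : a ≤ x ⊔ b := le_sup_left.trans hxb.le
  have hby : b ≤ y ⊔ a := le_sup_right.trans (hay.le.trans_eq (sup_comm a y))
  refine ⟨x ⊓ a, inf_le_right, y ⊓ b, inf_le_right,
    (disjoint_iff.2 hxy).mono inf_le_left inf_le_left, ?_, ?_⟩
  · rw [sup_inf_right]
    exact le_inf hax le_sup_left
  · rw [sup_inf_right]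
    exact le_inf hby le_sup_left

end CompletelyNormal

section Comparison

variable {X L : Type*} [DistribLattice L] [OrderBot L] {d : X → X → L}

/-- An abstraction of `d x y = ⟨(x - y)⁺⟩`, the principal `ℓ`-ideal that measures by how much `x`
exceeds `y` in a vector lattice. -/
structure IsComparison (d : X → X → L) : Prop where
  self : ∀ x, d x x = ⊥
  disjoint_swap : ∀ x y, Disjoint (d x y) (d y x)
  triangle : ∀ x y z, d x z ≤ d x y ⊔ d y z

/-- The functions `up x = d q x` and `lo x = d x q`, for `x ∈ s`, satisfy the conditions imposed on
a new point `q` by `IsComparison`. -/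
structure IsCut (d : X → X → L) (s : Set X) (up lo : X → L) : Prop where
  disjoint : ∀ x ∈ s, Disjoint (up x) (lo x)
  up_le : ∀ x ∈ s, ∀ y ∈ s, up x ≤ up y ⊔ d y x
  lo_le : ∀ x ∈ s, ∀ y ∈ s, lo x ≤ d x y ⊔ lo y
  le_lo_sup_up : ∀ x ∈ s, ∀ y ∈ s, d x y ≤ lo x ⊔ up y

/-- If the cuts `(up, lo)` and `(up', lo')` on `s` are those of `q` and `q'`, then `u` satisfies the
triangle inequalities imposed on `d q q'`. -/
structure IsGap (s : Set X) (up lo up' lo' : X → L) (u : L) : Prop where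
  le : ∀ x ∈ s, u ≤ up x ⊔ lo' x
  up_le : ∀ x ∈ s, up x ≤ u ⊔ up' x
  lo_le : ∀ x ∈ s, lo' x ≤ lo x ⊔ u

theorem IsComparison.isCut (hd : IsComparison d) (q : X) (s : Set X) :
    IsCut d s (fun x => d q x) (fun x => d x q) where
  disjoint x _ := hd.disjoint_swap q x
  up_le x _ y _ := hd.triangle q y x
  lo_le x _ y _ := hd.triangle x y q
  le_lo_sup_up x _ y _ := hd.triangle x q y

theorem IsComparison.isCut_singleton (hd : IsComparison d) (x : X) {up lo : X → L}
    (h : Disjoint (up x) (lo x)) : IsCut d {x} up lo where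
  disjoint := by rintro _ rfl; exact h
  up_le := by rintro _ rfl _ rfl; exact le_sup_left
  lo_le := by rintro _ rfl _ rfl; exact le_sup_right
  le_lo_sup_up := by rintro _ rfl _ rfl; simp only [hd.self, bot_le]

namespace IsCut

variable {s : Set X} {up lo up' lo' : X → L}

theorem symm (h : IsCut d s up lo) : IsCut (fun x y => d y x) s lo up where
  disjoint x hx := (h.disjoint x hx).symm
  up_le x hx y hy := (h.lo_le x hx y hy).trans_eq (sup_comm _ _)
  lo_le x hx y hy := (h.up_le x hx y hy).trans_eq (sup_comm _ _)
  le_lo_sup_up x hx y hy := (h.le_lo_sup_up y hy x hx).trans_eq (sup_comm _ _)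

theorem congr (h : IsCut d s up lo) (hup : Set.EqOn up' up s) (hlo : Set.EqOn lo' lo s) :
    IsCut d s up' lo' where
  disjoint x hx := by rw [hup hx, hlo hx]; exact h.disjoint x hx
  up_le x hx y hy := by rw [hup hx, hup hy]; exact h.up_le x hx y hy
  lo_le x hx y hy := by rw [hlo hx, hlo hy]; exact h.lo_le x hx y hy
  le_lo_sup_up x hx y hy := by rw [hlo hx, hup hy]; exact h.le_lo_sup_up x hx y hy

theorem of_forall_pair (h : ∀ x y, ∃ s, x ∈ s ∧ y ∈ s ∧ IsCut d s up lo) :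
    IsCut d Set.univ up lo where
  disjoint x _ := let ⟨_, hx, _, hs⟩ := h x x; hs.disjoint x hx
  up_le x _ y _ := let ⟨_, hx, hy, hs⟩ := h x y; hs.up_le x hx y hy
  lo_le x _ y _ := let ⟨_, hx, hy, hs⟩ := h x y; hs.lo_le x hx y hy
  le_lo_sup_up x _ y _ := let ⟨_, hx, hy, hs⟩ := h x y; hs.le_lo_sup_up x hx y hy

theorem insert [DecidableEq X] (hd : IsComparison d) {a : X} (ha : a ∉ s)
    (h : IsCut d s up lo) {u l : L} (hul : Disjoint u l)
    (hu : IsGap s up lo (d a) (fun x => d x a) u) (hl : IsGap s (d a) (fun x => d x a) up lo l) :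
    IsCut d (insert a s) (Function.update up a u) (Function.update lo a l) := by
  have hup : ∀ x ∈ s, Function.update up a u x = up x := fun x hx =>
    Function.update_of_ne (ne_of_mem_of_not_mem hx ha) _ _
  have hlo : ∀ x ∈ s, Function.update lo a l x = lo x := fun x hx =>
    Function.update_of_ne (ne_of_mem_of_not_mem hx ha) _ _
  constructor
  case disjoint =>
    rintro x (rfl | hx)
    · simpa only [Function.update_self]
    · simpa only [hup x hx, hlo x hx] using h.disjoint x hx
  case up_le =>
    rintro x (rfl | hx) y (rfl | hy)
    · exact le_sup_left
    · simpa only [Function.update_self, hup y hy] using hu.le y hy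
    · simpa only [Function.update_self, hup x hx] using hu.up_le x hx
    · simpa only [hup x hx, hup y hy] using h.up_le x hx y hy
  case lo_le =>
    rintro x (rfl | hx) y (rfl | hy)
    · exact le_sup_right
    · simpa only [Function.update_self, hlo y hy] using hl.le y hy
    · simpa only [Function.update_self, hlo x hx] using hl.lo_le x hx
    · simpa only [hlo x hx, hlo y hy] using h.lo_le x hx y hy
  case le_lo_sup_up =>
    rintro x (rfl | hx) y (rfl | hy)
    · simp only [hd.self, bot_le]
    · simpa only [Function.update_self, hup y hy] using hl.up_le y hy
    · simpa only [Function.update_self, hlo x hx] using hu.lo_le x hx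
    · simpa only [hlo x hx, hup y hy] using h.le_lo_sup_up x hx y hy

variable {t : Finset X} (ht : t.Nonempty)

theorem up_le_inf'_sup (h : IsCut d t up lo) (h' : IsCut d t up' lo') {x : X} (hx : x ∈ t) :
    up x ≤ (t.inf' ht fun y => up y ⊔ lo' y) ⊔ up' x := by
  rw [Finset.inf'_sup_distrib_right]
  refine Finset.le_inf' _ _ fun y hy => ?_
  rw [sup_assoc]
  exact (h.up_le x hx y hy).trans (sup_le_sup_left (h'.le_lo_sup_up y hy x hx) _)

theorem up_le_sup (h : IsCut d t up lo) (h' : IsCut d t up' lo') {u : L}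
    (hu : (t.inf' ht fun x => up x ⊔ lo' x) ≤ u ⊔ t.inf' ht fun x => up' x ⊔ lo x) {x : X}
    (hx : x ∈ t) : up x ≤ u ⊔ up' x := by
  refine (h.disjoint x hx).left_le_of_le_sup_right ?_
  calc up x ≤ (t.inf' ht fun y => up y ⊔ lo' y) ⊔ up' x := h.up_le_inf'_sup ht h' hx
    _ ≤ (u ⊔ (up' x ⊔ lo x)) ⊔ up' x :=
      sup_le_sup_right (hu.trans (sup_le_sup_left (Finset.inf'_le _ hx) u)) _
    _ = (u ⊔ up' x) ⊔ lo x := by ac_rfl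

theorem isGap (h : IsCut d t up lo) (h' : IsCut d t up' lo') {u : L}
    (hu : u ≤ t.inf' ht fun x => up x ⊔ lo' x)
    (hu' : (t.inf' ht fun x => up x ⊔ lo' x) ≤ u ⊔ t.inf' ht fun x => up' x ⊔ lo x) :
    IsGap t up lo up' lo' u where
  le x hx := hu.trans (Finset.inf'_le _ hx)
  up_le x hx := h.up_le_sup ht h' hu' hx
  lo_le x hx := by
    rw [sup_comm]
    refine h'.symm.up_le_sup ht h.symm ?_ hx
    simpa only [sup_comm] using hu'

include ht in
theorem exists_isGap (hL : IsCompletelyNormal L) (h : IsCut d t up lo)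
    (h' : IsCut d t up' lo') :
    ∃ u l, Disjoint u l ∧ IsGap t up lo up' lo' u ∧ IsGap t up' lo' up lo l := by
  obtain ⟨u, hu, l, hl, hul, hu', hl'⟩ := hL.exists_disjoint
    (t.inf' ht fun x => up x ⊔ lo' x) (t.inf' ht fun x => up' x ⊔ lo x)
  exact ⟨u, l, hul, h.isGap ht h' hu hu', h'.isGap ht h hl hl'⟩

include ht in
theorem exists_insert (hL : IsCompletelyNormal L) (hd : IsComparison d) (h : IsCut d t up lo)
    {a : X} (ha : a ∉ t) :
    ∃ up' lo', IsCut d (Insert.insert a (t : Set X)) up' lo' ∧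
      Set.EqOn up up' t ∧ Set.EqOn lo lo' t := by
  classical
  obtain ⟨u, l, hul, hu, hl⟩ := h.exists_isGap ht hL (hd.isCut a t)
  have hne : ∀ x ∈ t, x ≠ a := fun x hx => ne_of_mem_of_not_mem hx ha
  exact ⟨_, _, h.insert hd ha hul hu hl,
    fun x hx => (Function.update_of_ne (hne x hx) _ _).symm,
    fun x hx => (Function.update_of_ne (hne x hx) _ _).symm⟩

end IsCut

/-- A cut on a finite nonempty set. Ordered by extension, these are the forcing conditions of which
a generic filter yields a cut defined everywhere. -/
structure FiniteCut (d : X → X → L) where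
  dom : Finset X
  nonempty : dom.Nonempty
  up : X → L
  lo : X → L
  isCut : IsCut d dom up lo

namespace FiniteCut

instance : Preorder (FiniteCut d) where
  le p q := p.dom ⊆ q.dom ∧ Set.EqOn p.up q.up p.dom ∧ Set.EqOn p.lo q.lo p.dom
  le_refl _ := ⟨subset_rfl, Set.eqOn_refl _ _, Set.eqOn_refl _ _⟩
  le_trans _ _ _ hpq hqr := ⟨hpq.1.trans hqr.1, hpq.2.1.trans (hqr.2.1.mono hpq.1),
    hpq.2.2.trans (hqr.2.2.mono hpq.1)⟩

theorem isCofinal_mem_dom (hL : IsCompletelyNormal L) (hd : IsComparison d) (a : X) :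
    IsCofinal {p : FiniteCut d | a ∈ p.dom} := by
  classical
  intro p
  by_cases ha : a ∈ p.dom
  · exact ⟨p, ha, le_rfl⟩
  obtain ⟨up, lo, h, hup, hlo⟩ := p.isCut.exists_insert p.nonempty hL hd ha
  exact ⟨⟨insert a p.dom, Finset.insert_nonempty _ _, up, lo, by rwa [Finset.coe_insert]⟩,
    Finset.mem_insert_self _ _, Finset.subset_insert _ _, hup, hlo⟩

end FiniteCut

theorem IsComparison.exists_cut [Countable X] (hL : IsCompletelyNormal L) (hd : IsComparison d)
    (x₀ : X) (a : L) : ∃ up lo : X → L, IsCut d Set.univ up lo ∧ lo x₀ = a := by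
  classical
  have := Encodable.ofCountable X
  let p₀ : FiniteCut d := ⟨{x₀}, Finset.singleton_nonempty x₀, fun _ => ⊥, fun _ => a, by
    simpa only [Finset.coe_singleton] using hd.isCut_singleton x₀ disjoint_bot_left⟩
  let D : X → Order.Cofinal (FiniteCut d) := fun a => ⟨_, FiniteCut.isCofinal_mem_dom hL hd a⟩
  let I := Order.idealOfCofinals p₀ D
  obtain ⟨up, hup⟩ := exists_forall_eqOn_of_directedOn (D := fun p => (p.dom : Set X))
    (f := FiniteCut.up) I.directed fun p q hpq => hpq.2.1
  obtain ⟨lo, hlo⟩ := exists_forall_eqOn_of_directedOn (D := fun p => (p.dom : Set X))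
    (f := FiniteCut.lo) I.directed fun p q hpq => hpq.2.2
  refine ⟨up, lo, .of_forall_pair fun x y => ?_, hlo p₀ (Order.mem_idealOfCofinals p₀ D)
    (Finset.mem_coe.2 (Finset.mem_singleton_self x₀))⟩
  obtain ⟨p, hxp, hp⟩ := Order.cofinal_meets_idealOfCofinals p₀ D x
  obtain ⟨q, hyq, hq⟩ := Order.cofinal_meets_idealOfCofinals p₀ D y
  obtain ⟨r, hr, hpr, hqr⟩ := I.directed p hp q hq
  exact ⟨r.dom, hpr.1 hxp, hqr.1 hyq, r.isCut.congr (hup r hr) (hlo r hr)⟩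

end Comparison

section SignValuation

variable {k : Type*} [DivisionRing k] [LinearOrder k] {L : Type*} [DistribLattice L] [OrderBot L]
  {V W : Type*} [AddCommGroup V] [Module k V] [AddCommGroup W] [Module k W]

/-- A map with the formal properties of `x ↦ ⟨x⁺⟩`, from the elements of a vector lattice over `k`
to its principal `ℓ`-ideals. -/
structure IsSignValuation (k : Type*) [DivisionRing k] [LinearOrder k] {L : Type*}
    [DistribLattice L] [OrderBot L] {V : Type*} [AddCommGroup V] [Module k V] (φ : V → L) :
    Prop where
  disjoint_neg : ∀ x, Disjoint (φ x) (φ (-x))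
  add_le : ∀ x y, φ (x + y) ≤ φ x ⊔ φ y
  smul_le : ∀ (c : k) x, 0 < c → φ (c • x) ≤ φ x

namespace IsSignValuation

variable {φ : V → L}

theorem map_zero (hφ : IsSignValuation k φ) : φ 0 = ⊥ := by
  simpa only [neg_zero, disjoint_self] using hφ.disjoint_neg 0

theorem comp (hφ : IsSignValuation k φ) (f : W →ₗ[k] V) : IsSignValuation k (φ ∘ f) where
  disjoint_neg x := by simpa only [Function.comp_apply, map_neg] using hφ.disjoint_neg (f x)
  add_le x y := by simpa only [Function.comp_apply, map_add] using hφ.add_le (f x) (f y)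
  smul_le c x hc := by simpa only [Function.comp_apply, map_smul] using hφ.smul_le c (f x) hc

theorem restrict (hφ : IsSignValuation k φ) (S : Submodule k V) :
    IsSignValuation k fun x : S => φ x :=
  hφ.comp S.subtype

theorem neg (hφ : IsSignValuation k φ) : IsSignValuation k fun x => φ (-x) :=
  hφ.comp (-LinearMap.id)

theorem isComparison (hφ : IsSignValuation k φ) : IsComparison fun x y => φ (x - y) where
  self x := by rw [sub_self, hφ.map_zero]
  disjoint_swap x y := by simpa only [neg_sub] using hφ.disjoint_neg (x - y)
  triangle x y z := by simpa only [sub_add_sub_cancel] using hφ.add_le (x - y) (y - z)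

variable [IsStrictOrderedRing k]

theorem map_smul_of_pos (hφ : IsSignValuation k φ) {c : k} (hc : 0 < c) (x : V) :
    φ (c • x) = φ x := by
  refine (hφ.smul_le c x hc).antisymm ?_
  simpa only [inv_smul_smul₀ hc.ne'] using hφ.smul_le c⁻¹ (c • x) (inv_pos.2 hc)

theorem eq_of_smul_eq_smul (hφ : IsSignValuation k φ) {c d : k} (hc : 0 < c) (hd : 0 < d)
    {x y : V} (h : c • x = d • y) : φ x = φ y := by
  rw [← hφ.map_smul_of_pos hc, h, hφ.map_smul_of_pos hd]

end IsSignValuation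

end SignValuation

section OneStepExtension

variable {k : Type*} [DivisionRing k] [LinearOrder k] {L V : Type*} [AddCommGroup V] [Module k V]

/-- The extension of a sign valuation `φ` from `V` to `V × k` for which `(up, lo)` is the cut of
`(0, -1)`: for `c ≠ 0`, the vector `(c • z, c)` is `c` times the difference of `(z, 0)` and
`(0, -1)`. -/
noncomputable def extendByCut (φ up lo : V → L) (p : V × k) : L :=
  if p.2 = 0 then φ p.1 else if 0 < p.2 then lo (p.2⁻¹ • p.1) else up (p.2⁻¹ • p.1)

theorem extendByCut_zero (φ up lo : V → L) (x : V) :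
    extendByCut φ up lo (x, (0 : k)) = φ x :=
  if_pos rfl

theorem extendByCut_of_pos (φ up lo : V → L) {c : k} (hc : 0 < c) (z : V) :
    extendByCut φ up lo (c • z, c) = lo z := by
  rw [extendByCut, if_neg hc.ne', if_pos hc, inv_smul_smul₀ hc.ne']

theorem extendByCut_of_neg (φ up lo : V → L) {c : k} (hc : c < 0) (z : V) :
    extendByCut φ up lo (c • z, c) = up z := by
  rw [extendByCut, if_neg hc.ne, if_neg hc.not_gt, inv_smul_smul₀ hc.ne]

variable [IsStrictOrderedRing k]

theorem extendByCut_neg (φ up lo : V → L) (p : V × k) :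
    extendByCut φ up lo (-p) = extendByCut (fun x => φ (-x)) lo up p := by
  obtain ⟨x, c⟩ := p
  rcases lt_trichotomy c 0 with hc | rfl | hc
  · simp [extendByCut, hc, hc.ne, hc.not_gt]
  · simp [extendByCut]
  · simp [extendByCut, hc, hc.ne', hc.not_gt]

namespace IsSignValuation

variable [DistribLattice L] [OrderBot L] {φ up lo : V → L}
  (hφ : IsSignValuation k φ) (h : IsCut (fun x y => φ (x - y)) Set.univ up lo)

include hφ h

omit [IsStrictOrderedRing k] hφ in
theorem isCut_symm : IsCut (fun x y => φ (-(x - y))) Set.univ lo up := by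
  simpa only [neg_sub] using h.symm

theorem lo_le_sup_lo {c d : k} (hc : 0 < c) (hd : 0 < d) {x y z : V}
    (hz : (c + d) • z = c • x + d • y) : lo z ≤ lo x ⊔ lo y := by
  have hcd := add_pos hc hd
  have hzx : φ (z - x) = φ (y - x) := hφ.eq_of_smul_eq_smul hcd hd (by
    rw [smul_sub, hz, add_smul, smul_sub]; abel)
  have hzy : φ (z - y) = φ (x - y) := hφ.eq_of_smul_eq_smul hcd hc (by
    rw [smul_sub, hz, add_smul, smul_sub]; abel)
  have hxy : φ (y - x) ⊓ φ (x - y) = ⊥ := (hφ.isComparison.disjoint_swap y x).eq_bot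
  calc lo z ≤ (φ (y - x) ⊔ lo x) ⊓ (φ (x - y) ⊔ lo y) :=
        le_inf (hzx ▸ h.lo_le z trivial x trivial) (hzy ▸ h.lo_le z trivial y trivial)
    _ ≤ (φ (y - x) ⊔ (lo x ⊔ lo y)) ⊓ (φ (x - y) ⊔ (lo x ⊔ lo y)) := by
        gcongr
        exacts [le_sup_left, le_sup_right]
    _ = lo x ⊔ lo y := by rw [← sup_inf_right, hxy, bot_sup_eq]

theorem lo_le_lo_sup {c : k} (hc : 0 < c) {x y z : V} (hz : c • z = c • x + y) :
    lo z ≤ lo x ⊔ φ y := by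
  have hzx : φ (z - x) = φ y := hφ.eq_of_smul_eq_smul hc one_pos (by
    rw [smul_sub, hz, one_smul, add_sub_cancel_left])
  exact hzx ▸ (h.lo_le z trivial x trivial).trans_eq (sup_comm _ _)

theorem lo_le_lo_sup_up {c d : k} (hd : d < 0) (hcd : 0 < c + d) {x y z : V}
    (hz : (c + d) • z = c • x + d • y) : lo z ≤ lo x ⊔ up y := by
  have hzx : φ (z - x) = φ (x - y) := hφ.eq_of_smul_eq_smul hcd (neg_pos.2 hd) (by
    rw [smul_sub, hz, add_smul, neg_smul, smul_sub]; abel)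
  calc lo z ≤ φ (x - y) ⊔ lo x := hzx ▸ h.lo_le z trivial x trivial
    _ ≤ lo x ⊔ up y := sup_le (h.le_lo_sup_up x trivial y trivial) le_sup_left

theorem extendByCut_add_le_of_pos_of_neg {c d : k} (hc : 0 < c) (hd : d < 0) (x y : V) :
    extendByCut φ up lo ((c • x, c) + (d • y, d)) ≤ lo x ⊔ up y := by
  rw [Prod.mk_add_mk]
  rcases lt_trichotomy (c + d) 0 with hcd | hcd | hcd
  · obtain ⟨z, hz : (c + d) • z = c • x + d • y⟩ :=
      MulAction.surjective₀ hcd.ne (c • x + d • y)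
    rw [← hz, extendByCut_of_neg _ _ _ hcd, sup_comm]
    refine hφ.neg.lo_le_lo_sup_up (isCut_symm h) (neg_lt_zero.2 hc) (c := -d) ?_ ?_
    · rwa [← neg_add_rev, neg_pos]
    · rw [← neg_add_rev, neg_smul, hz, neg_smul, neg_smul, neg_add_rev]
  · rw [hcd, extendByCut_zero, eq_neg_of_add_eq_zero_right hcd, neg_smul, ← sub_eq_add_neg,
      ← smul_sub, hφ.map_smul_of_pos hc]
    exact h.le_lo_sup_up x trivial y trivial
  · obtain ⟨z, hz⟩ := MulAction.surjective₀ hcd.ne' (c • x + d • y)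
    rw [← hz, extendByCut_of_pos _ _ _ hcd]
    exact hφ.lo_le_lo_sup_up h hd hcd hz

theorem extendByCut_add_le_of_pos {p : V × k} (hp : 0 < p.2) (q : V × k) :
    extendByCut φ up lo (p + q) ≤ extendByCut φ up lo p ⊔ extendByCut φ up lo q := by
  obtain ⟨x, c⟩ := p
  obtain ⟨y, d⟩ := q
  replace hp : 0 < c := hp
  obtain ⟨x, rfl⟩ := MulAction.surjective₀ hp.ne' x
  rw [extendByCut_of_pos _ _ _ hp]
  rcases lt_trichotomy d 0 with hd | rfl | hd
  · obtain ⟨y, rfl⟩ := MulAction.surjective₀ hd.ne y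
    rw [extendByCut_of_neg _ _ _ hd]
    exact hφ.extendByCut_add_le_of_pos_of_neg h hp hd x y
  · obtain ⟨z, hz⟩ := MulAction.surjective₀ hp.ne' (c • x + y)
    rw [Prod.mk_add_mk, add_zero, extendByCut_zero, ← hz, extendByCut_of_pos _ _ _ hp]
    exact hφ.lo_le_lo_sup h hp hz
  · obtain ⟨y, rfl⟩ := MulAction.surjective₀ hd.ne' y
    obtain ⟨z, hz⟩ := MulAction.surjective₀ (add_pos hp hd).ne' (c • x + d • y)
    rw [Prod.mk_add_mk, ← hz, extendByCut_of_pos _ _ _ hd,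
      extendByCut_of_pos _ _ _ (add_pos hp hd)]
    exact hφ.lo_le_sup_lo h hp hd hz

theorem extendByCut_add_le_of_neg {p : V × k} (hp : p.2 < 0) (q : V × k) :
    extendByCut φ up lo (p + q) ≤ extendByCut φ up lo p ⊔ extendByCut φ up lo q := by
  have := hφ.neg.extendByCut_add_le_of_pos (isCut_symm h) (p := -p) (neg_pos.2 hp) (-q)
  simpa only [← neg_add, ← extendByCut_neg, neg_neg] using this

theorem extendByCut_add_le (p q : V × k) :
    extendByCut φ up lo (p + q) ≤ extendByCut φ up lo p ⊔ extendByCut φ up lo q := by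
  rcases lt_trichotomy p.2 0 with hp | hp | hp
  · exact hφ.extendByCut_add_le_of_neg h hp q
  · rcases lt_trichotomy q.2 0 with hq | hq | hq
    · rw [add_comm, sup_comm]
      exact hφ.extendByCut_add_le_of_neg h hq p
    · obtain ⟨x, c⟩ := p
      obtain ⟨y, d⟩ := q
      obtain rfl : c = 0 := hp
      obtain rfl : d = 0 := hq
      simpa only [Prod.mk_add_mk, add_zero, extendByCut_zero] using hφ.add_le x y
    · rw [add_comm, sup_comm]
      exact hφ.extendByCut_add_le_of_pos h hq p
  · exact hφ.extendByCut_add_le_of_pos h hp q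

theorem extendByCut : IsSignValuation k (extendByCut φ up lo : V × k → L) where
  disjoint_neg := by
    rintro ⟨x, c⟩
    rw [extendByCut_neg]
    rcases lt_trichotomy c 0 with hc | rfl | hc
    · obtain ⟨z, rfl⟩ := MulAction.surjective₀ hc.ne x
      rw [extendByCut_of_neg _ _ _ hc, extendByCut_of_neg _ _ _ hc]
      exact h.disjoint z trivial
    · rw [extendByCut_zero, extendByCut_zero]
      exact hφ.disjoint_neg x
    · obtain ⟨z, rfl⟩ := MulAction.surjective₀ hc.ne' x
      rw [extendByCut_of_pos _ _ _ hc, extendByCut_of_pos _ _ _ hc]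
      exact (h.disjoint z trivial).symm
  add_le := hφ.extendByCut_add_le h
  smul_le := by
    rintro a ⟨x, c⟩ ha
    rw [Prod.smul_mk, smul_eq_mul]
    rcases lt_trichotomy c 0 with hc | rfl | hc
    · obtain ⟨z, rfl⟩ := MulAction.surjective₀ hc.ne x
      rw [smul_smul, extendByCut_of_neg _ _ _ hc,
        extendByCut_of_neg _ _ _ (mul_neg_of_pos_of_neg ha hc)]
    · rw [mul_zero, extendByCut_zero, extendByCut_zero]
      exact hφ.smul_le a x ha
    · obtain ⟨z, rfl⟩ := MulAction.surjective₀ hc.ne' x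
      rw [smul_smul, extendByCut_of_pos _ _ _ hc, extendByCut_of_pos _ _ _ (mul_pos ha hc)]

omit h in
theorem exists_extension [Countable V] (hL : IsCompletelyNormal L) (a : L) :
    ∃ ψ : V × k → L, IsSignValuation k ψ ∧ (∀ x, ψ (x, 0) = φ x) ∧ ψ (0, 1) = a := by
  obtain ⟨up, lo, h, rfl⟩ := hφ.isComparison.exists_cut hL 0 a
  refine ⟨_, hφ.extendByCut h, extendByCut_zero φ up lo, ?_⟩
  simpa only [smul_zero] using extendByCut_of_pos φ up lo (one_pos (α := k)) 0

end IsSignValuation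

end OneStepExtension

section TransfiniteExtension

theorem restrictDom_eq_self {k I : Type*} [Semiring k] {s : Set I} [DecidablePred (· ∈ s)]
    {x : I →₀ k} (hx : x ∈ Finsupp.supported k k s) : Finsupp.restrictDom k k s x = ⟨x, hx⟩ :=
  LinearMap.congr_fun (Finsupp.restrictDom_comp_subtype s) ⟨x, hx⟩

variable {k : Type u} [DivisionRing k] [LinearOrder k] {L : Type v} [DistribLattice L] [OrderBot L]

theorem IsSignValuation.of_forall_exists_eqOn {V : Type*} [AddCommGroup V] [Module k V] {φ : V → L}
    (h : ∀ x y, ∃ (S : Submodule k V) (χ : V → L), x ∈ S ∧ y ∈ S ∧ IsSignValuation k χ ∧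
      Set.EqOn φ χ S) : IsSignValuation k φ where
  disjoint_neg x := by
    obtain ⟨S, χ, hx, -, hχ, heq⟩ := h x x
    rw [heq hx, heq (S.neg_mem hx)]
    exact hχ.disjoint_neg x
  add_le x y := by
    obtain ⟨S, χ, hx, hy, hχ, heq⟩ := h x y
    rw [heq hx, heq hy, heq (S.add_mem hx hy)]
    exact hχ.add_le x y
  smul_le c x hc := by
    obtain ⟨S, χ, hx, -, hχ, heq⟩ := h x x
    rw [heq hx, heq (S.smul_mem c hx)]
    exact hχ.smul_le c x hc

variable {I : Type*} [LinearOrder I] {a : I → L}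

/-- A sign valuation taking the prescribed values `a` on the basis vectors with index in an initial
segment `dom`. It is defined on the whole free space, but only its restriction to the vectors
supported on `dom` matters for the ordering by extension. -/
structure PartialValuation (k : Type*) [DivisionRing k] [LinearOrder k] (a : I → L) where
  dom : LowerSet I
  toFun : (I →₀ k) → L
  isSignValuation : IsSignValuation k toFun
  map_single : ∀ i ∈ dom, toFun (Finsupp.single i 1) = a i

namespace PartialValuation

instance : Preorder (PartialValuation k a) where
  le p q := p.dom ≤ q.dom ∧ Set.EqOn p.toFun q.toFun (Finsupp.supported k k (p.dom : Set I))
  le_refl _ := ⟨le_rfl, Set.eqOn_refl _ _⟩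
  le_trans _ _ _ hpq hqr :=
    ⟨hpq.1.trans hqr.1, hpq.2.trans (hqr.2.mono (Finsupp.supported_mono hpq.1))⟩

instance : Nonempty (PartialValuation k a) :=
  ⟨{ dom := ⊥
     toFun := fun _ => ⊥
     isSignValuation := ⟨fun _ => disjoint_bot_left, fun _ _ => bot_le, fun _ _ _ => le_rfl⟩
     map_single := fun _ hi => hi.elim }⟩

theorem exists_mem_supported {c : Set (PartialValuation k a)} (hc : DirectedOn (· ≤ ·) c)
    (hne : c.Nonempty) {x : I →₀ k}
    (hx : x ∈ Finsupp.supported k k ((⨆ p ∈ c, p.dom : LowerSet I) : Set I)) :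
    ∃ p ∈ c, x ∈ Finsupp.supported k k (p.dom : Set I) := by
  rw [LowerSet.coe_iSup₂] at hx
  exact (hc.mono fun _ _ h => h.1).exists_mem_subset_of_finset_subset_biUnion hne
    (f := fun p : PartialValuation k a => (p.dom : Set I)) hx

theorem bddAbove_of_directedOn {c : Set (PartialValuation k a)} (hc : DirectedOn (· ≤ ·) c)
    (hne : c.Nonempty) : BddAbove c := by
  classical
  obtain ⟨g, hg⟩ := exists_forall_eqOn_of_directedOn (f := toFun)
    (D := fun p => (Finsupp.supported k k (p.dom : Set I) : Set (I →₀ k))) hc fun p q hpq => hpq.2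
  let U : LowerSet I := ⨆ p ∈ c, p.dom
  have hU : ∀ p ∈ c, p.dom ≤ U := fun p hp => le_iSup₂ (f := fun p _ => p.dom) p hp
  have hgU : IsSignValuation k fun x : Finsupp.supported k k (U : Set I) => g x := by
    refine .of_forall_exists_eqOn fun x y => ?_
    obtain ⟨p, hp, hx⟩ := exists_mem_supported hc hne x.2
    obtain ⟨q, hq, hy⟩ := exists_mem_supported hc hne y.2
    obtain ⟨r, hr, hpr, hqr⟩ := hc p hp q hq
    exact ⟨(Finsupp.supported k k (r.dom : Set I)).comap (Submodule.subtype _), _,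
      Finsupp.supported_mono hpr.1 hx, Finsupp.supported_mono hqr.1 hy,
      (r.isSignValuation.restrict _), fun z hz => hg r hr hz⟩
  let φ : (I →₀ k) → L := fun x => g (Finsupp.restrictDom k k (U : Set I) x)
  have hφ : ∀ p ∈ c, Set.EqOn p.toFun φ (Finsupp.supported k k (p.dom : Set I)) :=
    fun p hp x hx => by
      simp only [φ, restrictDom_eq_self (Finsupp.supported_mono (hU p hp) hx), hg p hp hx]
  refine ⟨⟨U, φ, hgU.comp (Finsupp.restrictDom k k (U : Set I)), fun i hi => ?_⟩,
    fun p hp => ⟨hU p hp, hφ p hp⟩⟩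
  obtain ⟨p, hp, hip⟩ : ∃ p ∈ c, i ∈ p.dom := by
    simpa only [U, LowerSet.mem_iSup₂_iff, exists_prop] using hi
  rw [← hφ p hp (Finsupp.single_mem_supported k 1 hip), p.map_single i hip]

theorem exists_le_mem_dom [IsStrictOrderedRing k] [Countable k] (hL : IsCompletelyNormal L)
    (p : PartialValuation k a) {i : I} (hi : (Set.Iio i).Countable)
    (hp : p.dom = LowerSet.Iio i) : ∃ q, p ≤ q ∧ i ∈ q.dom := by
  classical
  let S := Finsupp.supported k k (Set.Iio i)
  have := hi.to_subtype
  have : Countable S := (Finsupp.supportedEquivFinsupp (Set.Iio i)).injective.countable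
  have hS : IsSignValuation k fun x : S => p.toFun x := p.isSignValuation.restrict S
  obtain ⟨ψ, hψ, hψS, hψi⟩ := hS.exists_extension hL (a i)
  let φ : (I →₀ k) → L := fun x => ψ (Finsupp.restrictDom k k (Set.Iio i) x, x i)
  have hφ : IsSignValuation k φ :=
    hψ.comp ((Finsupp.restrictDom k k (Set.Iio i)).prod (Finsupp.lapply i))
  have hφS : Set.EqOn p.toFun φ S := fun x hx => by
    have hxi : x i = 0 := (Finsupp.mem_supported' k x).1 hx i Set.self_notMem_Iio
    simp only [φ, restrictDom_eq_self hx, hxi, hψS]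
  have hφi : φ (Finsupp.single i 1) = a i := by
    have : Finsupp.restrictDom k k (Set.Iio i) (Finsupp.single i 1) = 0 := Subtype.ext
      (Finsupp.filter_single_of_neg _ Set.self_notMem_Iio)
    simp only [φ, this, Finsupp.single_eq_same, hψi]
  refine ⟨⟨LowerSet.Iic i, φ, hφ, fun j hj => ?_⟩, ⟨hp.trans_le ?_, ?_⟩,
    LowerSet.mem_Iic_iff.2 le_rfl⟩
  · obtain rfl | hj := (LowerSet.mem_Iic_iff.1 hj).eq_or_lt
    · exact hφi
    · rw [← hφS (Finsupp.single_mem_supported k 1 hj), p.map_single j (hp ▸ hj)]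
  · exact Set.Iio_subset_Iic_self
  · simp only [hp, LowerSet.coe_Iio]
    exact hφS

end PartialValuation

theorem exists_isSignValuation_map_single [IsStrictOrderedRing k] [Countable k] [WellFoundedLT I]
    (hL : IsCompletelyNormal L) (hI : ∀ i : I, (Set.Iio i).Countable) (a : I → L) :
    ∃ φ : (I →₀ k) → L, IsSignValuation k φ ∧ ∀ i, φ (Finsupp.single i 1) = a i := by
  obtain ⟨p, hp⟩ := zorn_le_nonempty fun (c : Set (PartialValuation k a)) hc hne =>
    PartialValuation.bddAbove_of_directedOn hc.directedOn hne
  refine ⟨p.toFun, p.isSignValuation, fun i => p.map_single i ?_⟩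
  obtain hdom | ⟨j, hj⟩ := p.dom.lower.eq_univ_or_Iio
  · exact (hdom ▸ Set.mem_univ i : i ∈ (p.dom : Set I))
  · obtain ⟨q, hpq, hjq⟩ := p.exists_le_mem_dom hL (hI j) (SetLike.coe_injective hj)
    have hjp : j ∈ (p.dom : Set I) := (hp hpq).1 hjq
    exact absurd (hj ▸ hjp) Set.self_notMem_Iio

theorem exists_isSignValuation_surjective (k : Type u) [DivisionRing k] [LinearOrder k]
    [IsStrictOrderedRing k] [Countable k] (hL : IsCompletelyNormal L)
    (hcard : Cardinal.mk L ≤ Cardinal.aleph 1) :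
    ∃ (V : Type v) (_ : AddCommGroup V) (_ : Module k V) (φ : V → L),
      IsSignValuation k φ ∧ Function.Surjective φ := by
  let I := (Cardinal.mk L).ord.ToType
  obtain ⟨e⟩ : Nonempty (I ≃ L) := Cardinal.eq.1 (Cardinal.mk_ord_toType _)
  have hI : ∀ i : I, (Set.Iio i).Countable := fun i => by
    have hlt : Cardinal.mk (Set.Iio i) < Cardinal.aleph 1 :=
      (Cardinal.mk_Iio_lt i (by simp [I])).trans_le ((Cardinal.mk_congr e).trans_le hcard)
    rwa [← Cardinal.succ_aleph0, Order.lt_succ_iff, Cardinal.mk_le_aleph0_iff] at hlt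
  obtain ⟨φ, hφ, hφe⟩ := exists_isSignValuation_map_single (k := k) hL hI e
  have hsurj : Function.Surjective φ := fun l => ⟨_, (hφe (e.symm l)).trans (e.apply_symm_apply l)⟩
  have : Small.{v} (I →₀ k) :=
    ⟨I →₀ Shrink.{v} k, ⟨(Finsupp.mapRange.addEquiv Shrink.addEquiv.symm).toEquiv⟩⟩
  exact ⟨Shrink.{v} (I →₀ k), inferInstance, inferInstance, _,
    hφ.comp (Shrink.linearEquiv k (I →₀ k)).toLinearMap,
    hsurj.comp (Shrink.linearEquiv k (I →₀ k)).surjective⟩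

end TransfiniteExtension

section TotalCone

variable {k : Type*} [DivisionRing k] [LinearOrder k] [IsStrictOrderedRing k] {V : Type*}
  [AddCommGroup V] [Module k V]

theorem mkQ_mem_map_mkQ_lineal_iff {C : PointedCone k V} {x : V} :
    C.lineal.mkQ x ∈ C.map C.lineal.mkQ ↔ x ∈ C := by
  refine ⟨?_, fun hx => PointedCone.mem_map.2 ⟨x, hx, rfl⟩⟩
  rintro ⟨y, hy, hyx⟩
  have hxy : x - y ∈ C.lineal := (Submodule.Quotient.eq _).1 hyx.symm
  simpa only [sub_add_cancel] using C.add_mem hxy.1 hy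

theorem exists_linearOrder_quotient_lineal {C : PointedCone k V} (hC : ∀ x, x ∈ C ∨ -x ∈ C) :
    ∃ _ : LinearOrder (V ⧸ C.lineal), IsOrderedAddMonoid (V ⧸ C.lineal) ∧
      PosSMulMono k (V ⧸ C.lineal) ∧ ∀ x, 0 ≤ C.lineal.mkQ x ↔ x ∈ C := by
  classical
  let K : AddGroupCone (V ⧸ C.lineal) :=
    { (C.map C.lineal.mkQ).toAddSubmonoid with
      eq_zero_of_mem_of_neg_mem' := fun {t} ht ht' => by
        obtain ⟨x, rfl⟩ := C.lineal.mkQ_surjective t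
        exact (Submodule.Quotient.mk_eq_zero _).2 ⟨mkQ_mem_map_mkQ_lineal_iff.1 ht,
          mkQ_mem_map_mkQ_lineal_iff.1 ht'⟩ }
  have : HasMemOrNegMem K := ⟨fun t => by
    obtain ⟨x, rfl⟩ := C.lineal.mkQ_surjective t
    exact (hC x).imp mkQ_mem_map_mkQ_lineal_iff.2 mkQ_mem_map_mkQ_lineal_iff.2⟩
  let : LinearOrder (V ⧸ C.lineal) := LinearOrder.mkOfAddGroupCone K
  have hK : ∀ t : V ⧸ C.lineal, 0 ≤ t ↔ t ∈ C.map C.lineal.mkQ := fun t =>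
    (congrArg (· ∈ K) (sub_zero t)).to_iff
  have : IsOrderedAddMonoid (V ⧸ C.lineal) := IsOrderedAddMonoid.mkOfCone K
  refine ⟨inferInstance, inferInstance, .of_smul_nonneg fun c hc t ht => ?_, fun x => ?_⟩
  · exact (hK _).2 (PointedCone.smul_mem _ hc ((hK t).1 ht))
  · exact (hK _).trans mkQ_mem_map_mkQ_lineal_iff

end TotalCone

section LatticeSpan

theorem mapsTo_latticeClosure {α β : Type*} [Lattice α] [Lattice β] {s : Set α} {t : Set β}
    {f : α → β} (hf : Set.MapsTo f s (latticeClosure t)) (hsup : ∀ a b, f (a ⊔ b) = f a ⊔ f b)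
    (hinf : ∀ a b, f (a ⊓ b) = f a ⊓ f b) :
    Set.MapsTo f (latticeClosure s) (latticeClosure t) := by
  rw [Set.mapsTo_iff_image_subset, image_latticeClosure s f hsup hinf]
  exact latticeClosure_min hf.image_subset isSublattice_latticeClosure

variable {k : Type*} [DivisionRing k] [LinearOrder k] [IsStrictOrderedRing k] {E : Type*}
  [Lattice E] [AddCommGroup E] [IsOrderedAddMonoid E] [Module k E] [PosSMulMono k E]

/-- The vector sublattice generated by a subspace: the lattice closure of a subspace is already
closed under the linear operations. -/
def latticeSpan (W : Submodule k E) : Submodule k E where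
  carrier := latticeClosure (W : Set E)
  zero_mem' := subset_latticeClosure W.zero_mem
  add_mem' {a b} ha hb := by
    refine mapsTo_latticeClosure (f := (· + b)) (fun x hx => ?_) (fun y z => sup_add y z b)
      (fun y z => inf_add y z b) ha
    exact mapsTo_latticeClosure (fun y hy => subset_latticeClosure (W.add_mem hx hy))
      (fun y z => add_sup y z x) (fun y z => add_inf y z x) hb
  smul_mem' c a ha := by
    have : PosSMulReflectLE k E := ⟨fun c hc x y hxy => by
      simpa only [inv_smul_smul₀ hc.ne'] using
        smul_le_smul_of_nonneg_left hxy (inv_nonneg.2 hc.le)⟩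
    have hpos : ∀ {c : k}, 0 < c → Set.MapsTo (c • · : E → E) (latticeClosure (W : Set E))
        (latticeClosure (W : Set E)) := fun hc =>
      mapsTo_latticeClosure (fun x hx => subset_latticeClosure (W.smul_mem _ hx))
        (OrderIso.smulRight hc).map_sup (OrderIso.smulRight hc).map_inf
    have hneg : -a ∈ latticeClosure (W : Set E) := by
      have := Set.mem_image_of_mem Neg.neg ha
      rw [image_latticeClosure' _ _ neg_sup neg_inf] at this
      exact latticeClosure_mono (Set.image_subset_iff.2 fun x hx => W.neg_mem hx) this
    rcases lt_trichotomy c 0 with hc | rfl | hc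
    · rw [← neg_smul_neg]
      exact hpos (neg_pos.2 hc) hneg
    · rw [zero_smul]
      exact subset_latticeClosure W.zero_mem
    · exact hpos hc ha

variable (W : Submodule k E)

instance : Lattice (latticeSpan W) :=
  Subtype.lattice (fun _ _ ha hb => isSublattice_latticeClosure.supClosed ha hb)
    (fun _ _ ha hb => isSublattice_latticeClosure.infClosed ha hb)

instance : PosSMulMono k (latticeSpan W) :=
  ⟨fun c hc a b hab =>
    show c • a.1 ≤ c • b.1 from smul_le_smul_of_nonneg_left (show a.1 ≤ b.1 from hab) hc⟩

end LatticeSpan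

section Support

variable {L : Type*} [DistribLattice L]

/-- The representation of a distributive lattice by sets of prime ideals, an element being sent to
the set of prime ideals that do not contain it. -/
def primeSupport (L : Type*) [DistribLattice L] :
    LatticeHom L (Set {P : Order.Ideal L // P.IsPrime}) where
  toFun l := {P | l ∉ P.1}
  map_sup' l m := by
    ext P
    exact Order.Ideal.sup_mem_iff.not.trans not_and_or
  map_inf' l m := by
    ext P
    refine Iff.trans (not_congr ⟨P.2.mem_or_mem, ?_⟩) not_or
    exact fun h => h.elim (P.1.lower inf_le_left) (P.1.lower inf_le_right)

theorem le_of_primeSupport_le {l m : L} (h : primeSupport L l ≤ primeSupport L m) : l ≤ m := by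
  by_contra hlm
  have hdisj : Disjoint (Order.PFilter.principal l : Set L) (Order.Ideal.principal m : Set L) :=
    Set.disjoint_left.2 fun x hx hx' => hlm ((Order.PFilter.mem_principal.1 hx).trans
      (Order.Ideal.mem_principal.1 hx'))
  obtain ⟨P, hP, hm, hl⟩ := DistribLattice.prime_ideal_of_disjoint_filter_ideal hdisj
  have hlP : l ∉ P := Set.disjoint_left.1 hl (Order.PFilter.mem_principal.2 le_rfl)
  exact h (show (⟨P, hP⟩ : {P : Order.Ideal L // P.IsPrime}) ∈ primeSupport L l from hlP)
    (Order.Ideal.principal_le_iff.1 hm)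

theorem primeSupport_injective : Function.Injective (primeSupport L) := fun _ _ h =>
  (le_of_primeSupport_le h.le).antisymm (le_of_primeSupport_le h.ge)

/-- The set of coordinates at which an element of a product of totally ordered groups is
positive. -/
def posSupport {ι : Type*} (T : ι → Type*) [∀ i, LinearOrder (T i)] [∀ i, Zero (T i)] :
    LatticeHom (∀ i, T i) (Set ι) where
  toFun a := {i | 0 < a i}
  map_sup' _ _ := Set.ext fun _ => lt_sup_iff
  map_inf' _ _ := Set.ext fun _ => lt_inf_iff

variable {ι : Type*} {T : ι → Type*} [∀ i, LinearOrder (T i)] [∀ i, AddCommGroup (T i)]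

theorem posSupport_sup_zero (a : ∀ i, T i) : posSupport T (a ⊔ 0) = posSupport T a :=
  Set.ext fun _ => lt_sup_iff.trans (or_iff_left (lt_irrefl _))

theorem posSupport_subset_of_le_nsmul [∀ i, IsOrderedAddMonoid (T i)] {a b : ∀ i, T i} {n : ℕ}
    (h : a ≤ n • b) : posSupport T a ⊆ posSupport T b := fun i hi => by
  by_contra hb
  exact (lt_of_lt_of_le hi (h i)).not_ge (nsmul_nonpos (not_lt.1 hb) n)

theorem self_mem_principalLIdeal {F : Type*} [Lattice F] [AddCommGroup F] [IsOrderedAddMonoid F]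
    {a : F} (ha : 0 ≤ a) : a ∈ principalLIdeal a :=
  ⟨1, by rw [one_nsmul, sup_eq_left.2 (neg_le_self ha)]⟩

theorem iUnion_posSupport_principalLIdeal [∀ i, IsOrderedAddMonoid (T i)] {F : Type*} [Lattice F]
    [AddCommGroup F] [IsOrderedAddMonoid F] {f : F →+ ∀ i, T i} (hf : Monotone f) {a : F}
    (ha : 0 ≤ a) : ⋃ x ∈ principalLIdeal a, posSupport T (f x) = posSupport T (f a) := by
  refine (Set.iUnion₂_subset ?_).antisymm
    (Set.subset_biUnion_of_mem (u := fun x => posSupport T (f x)) (self_mem_principalLIdeal ha))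
  rintro x ⟨n, hn⟩
  refine posSupport_subset_of_le_nsmul (n := n) ?_
  rw [← map_nsmul]
  exact hf (le_sup_left.trans hn)

end Support

section Realization

variable {k : Type u} [DivisionRing k] [LinearOrder k] [IsStrictOrderedRing k]
  {L : Type v} [DistribLattice L]

/-- The bundled vector lattice on a type that carries the corresponding unbundled structure. -/
abbrev VectorLatticeOver.of (k : Type u) [DivisionRing k] [LinearOrder k] (E : Type v) [Lattice E]
    [AddCommGroup E] [IsOrderedAddMonoid E] [Module k E] [PosSMulMono k E] :
    VectorLatticeOver.{u, v} k where
  carrier := E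
  add_le_add_left' _ _ hab c := add_le_add_right hab c
  smul_nonneg' _ _ hc hx := smul_nonneg hc.le hx

theorem exists_principalLIdeal_hom {ι : Type*} {σ : LatticeHom L (Set ι)}
    (hσ : Function.Injective σ) {T : ι → Type*} [∀ i, LinearOrder (T i)]
    [∀ i, AddCommGroup (T i)] [∀ i, IsOrderedAddMonoid (T i)] [∀ i, Module k (T i)]
    [∀ i, PosSMulMono k (T i)] {W : Submodule k (∀ i, T i)}
    (hW : posSupport T '' W = Set.range σ) :
    ∃ g : Set (latticeSpan W) → L,
      (∀ l : L, ∃ a, 0 ≤ a ∧ g (principalLIdeal a) = l) ∧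
      (∀ a b, 0 ≤ a → 0 ≤ b →
        g (principalLIdeal (a ⊔ b)) = g (principalLIdeal a) ⊔ g (principalLIdeal b) ∧
        g (principalLIdeal (a ⊓ b)) = g (principalLIdeal a) ⊓ g (principalLIdeal b)) := by
  let s : latticeSpan W → Set ι := fun a => posSupport T a
  have hs : ∀ a, s a ∈ Set.range σ := fun a => latticeClosure_min
    (Set.image_subset_iff.1 hW.subset) ((IsSublattice_range σ).preimage (posSupport T)) a.2
  have : Nonempty L := (hs 0).nonempty
  let g : Set (latticeSpan W) → L := fun I => Function.invFun σ (⋃ x ∈ I, s x)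
  have hg : ∀ a, 0 ≤ a → σ (g (principalLIdeal a)) = s a := fun a ha => by
    have := iUnion_posSupport_principalLIdeal (f := (latticeSpan W).subtype.toAddMonoidHom)
      (fun _ _ h => h) ha
    exact (congrArg (σ ∘ Function.invFun σ) this).trans (Function.invFun_eq (hs a))
  refine ⟨g, fun l => ?_, fun a b ha hb => ⟨hσ ?_, hσ ?_⟩⟩
  · obtain ⟨x, hx, hxl⟩ : σ l ∈ posSupport T '' W := hW ▸ ⟨l, rfl⟩
    let a : latticeSpan W := ⟨x, subset_latticeClosure hx⟩
    refine ⟨a ⊔ 0, le_sup_right, hσ ?_⟩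
    rw [hg (a ⊔ 0) le_sup_right, ← hxl]
    exact posSupport_sup_zero x
  · rw [map_sup, hg a ha, hg b hb, hg _ (le_sup_of_le_left ha)]
    exact map_sup (posSupport T) a.1 b.1
  · rw [map_inf, hg a ha, hg b hb, hg _ (le_inf ha hb)]
    exact map_inf (posSupport T) a.1 b.1

namespace IsSignValuation

variable [OrderBot L] {V : Type v} [AddCommGroup V] [Module k V] {φ : V → L}

/-- The vectors whose negative part vanishes modulo the ideal `P`. -/
def cone (hφ : IsSignValuation k φ) (P : Order.Ideal L) : PointedCone k V where
  carrier := {x | φ (-x) ∈ P}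
  zero_mem' := by
    change φ (-0) ∈ P
    rw [neg_zero, hφ.map_zero]
    exact P.bot_mem
  add_mem' {x y} hx hy := by
    change φ (-(x + y)) ∈ P
    rw [neg_add]
    exact P.lower (hφ.add_le _ _) (P.sup_mem hx hy)
  smul_mem' := by
    rintro ⟨c, hc⟩ x hx
    change φ (-(c • x)) ∈ P
    rw [← smul_neg]
    obtain rfl | hc := hc.eq_or_lt
    · rw [zero_smul, hφ.map_zero]
      exact P.bot_mem
    · exact P.lower (hφ.smul_le c _ hc) hx

theorem mem_cone_or_neg_mem_cone (hφ : IsSignValuation k φ) {P : Order.Ideal L} (hP : P.IsPrime)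
    (x : V) : x ∈ hφ.cone P ∨ -x ∈ hφ.cone P := by
  refine hP.mem_or_mem ?_
  rw [(hφ.disjoint_neg (-x)).eq_bot]
  exact P.bot_mem

theorem exists_posSupport_eq_primeSupport (hφ : IsSignValuation k φ) :
    ∃ (T : {P : Order.Ideal L // P.IsPrime} → Type v) (_ : ∀ P, LinearOrder (T P))
      (_ : ∀ P, AddCommGroup (T P)) (_ : ∀ P, IsOrderedAddMonoid (T P)) (_ : ∀ P, Module k (T P))
      (_ : ∀ P, PosSMulMono k (T P)) (π : V →ₗ[k] ∀ P, T P),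
      ∀ x, posSupport T (π x) = primeSupport L (φ x) := by
  choose ord hadd hsmul hnonneg using fun P : {P : Order.Ideal L // P.IsPrime} =>
    exists_linearOrder_quotient_lineal (hφ.mem_cone_or_neg_mem_cone P.2)
  refine ⟨_, ord, _, hadd, _, hsmul, LinearMap.pi fun P => (hφ.cone P.1).lineal.mkQ,
    fun x => Set.ext fun P => ?_⟩
  change 0 < (hφ.cone P.1).lineal.mkQ x ↔ φ x ∉ P.1
  rw [← not_le, ← neg_nonneg, ← map_neg, hnonneg, not_iff_not]
  exact (congrArg (φ · ∈ P.1) (neg_neg x)).to_iff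

end IsSignValuation

end Realization

/-- for a countable totally ordered division ring `k`, every completely
normal distributive `0`-lattice `L` with at most `ℵ₁` elements is the image of a
surjective lattice homomorphism from `Idc F` for some vector lattice `F` over `k`.
The surjective lattice homomorphism `Idc F ↠ L` is encoded by a map `g` on sets of
elements of `F`, applied to the principal `ℓ`-ideals `⟨a⟩` for `a ∈ F⁺` (every element
of `Idc F` has this form, joins and meets in `Idc F` being `⟨a ⊔ b⟩` and `⟨a ⊓ b⟩`). -/
theorem stmt0 (k : Type u) [DivisionRing k] [LinearOrder k]
    [CovariantClass k k (· + ·) (· < ·)] [PosMulStrictMono k] [MulPosStrictMono k]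
    [Countable k]
    (L : Type v) [DistribLattice L] [OrderBot L]
    (hcn : ∀ a b : L, ∃ x y : L, a ⊔ b = a ⊔ y ∧ a ⊔ b = x ⊔ b ∧ x ⊓ y = ⊥)
    (hcard : Cardinal.mk L ≤ Cardinal.aleph 1) :
    ∃ (F : VectorLatticeOver.{u, v} k) (g : Set F.carrier → L),
      (∀ l : L, ∃ a : F.carrier, 0 ≤ a ∧ g (principalLIdeal a) = l) ∧
      (∀ a b : F.carrier, 0 ≤ a → 0 ≤ b →
        g (principalLIdeal (a ⊔ b)) = g (principalLIdeal a) ⊔ g (principalLIdeal b) ∧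
        g (principalLIdeal (a ⊓ b)) = g (principalLIdeal a) ⊓ g (principalLIdeal b)) := by
  have := addLeftMono_of_addLeftStrictMono k
  have : IsOrderedAddMonoid k := { add_le_add_left := fun _ _ hab c => add_le_add_left hab c }
  have : IsStrictOrderedRing k := .of_mul_pos fun a b ha hb => mul_pos ha hb
  obtain ⟨V, _, _, φ, hφ, hsurj⟩ := exists_isSignValuation_surjective k hcn hcard
  obtain ⟨T, _, _, _, _, _, π, hπ⟩ := hφ.exists_posSupport_eq_primeSupport
  have hrange : posSupport T '' LinearMap.range π = Set.range (primeSupport L) := by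
    rw [LinearMap.coe_range, ← Set.range_comp, ← hsurj.range_comp]
    exact congrArg Set.range (funext hπ)
  obtain ⟨g, hg⟩ := exists_principalLIdeal_hom primeSupport_injective hrange
  exact ⟨.of k (latticeSpan _), g, hg⟩
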